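/- Let U_s : [0, ∞) → ℝ be C^∞ and suppose there exist a constant U₊ ∈ ℝ and constants C₀, η > 0 such that |U_s(y) − U₊| + |U_s'(y)| + |U_s''(y)| ≤ C₀ e^{−ηy} for all y ≥ 0. Let α > 0 and let c ∈ ℂ with Im c ≠ 0. Then there exist two solutions ψ₊, ψ₋ : [0, ∞) → ℂ of the Rayleigh equation with parameters α, c and profile U_s such that ψ₋(y) e^{αy} → 1 as y → ∞, |ψ₊(y)| ≤ C e^{αy} for some constant C and all y ≥ 0, and the Wronskian ψ₋(y)ψ₊'(y) − ψ₋'(y)ψ₊(y) is identically equal to 1. -/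

import Mathlib

open Set

/-- `ψ` (together with its first and second derivative functions `ψ'`, `ψ''`) is a twice
continuously differentiable solution on `I` of the Rayleigh equation
`(Us y - c) (ψ'' - α² ψ) - Us'' ψ = 0` with parameters `α`, `c` and profile `Us`. -/
def IsRayleighSolutionOn (Us : ℝ → ℝ) (α : ℝ) (c : ℂ)
    (ψ ψ' ψ'' : ℝ → ℂ) (I : Set ℝ) : Prop :=
  (∀ y ∈ I, HasDerivAt ψ (ψ' y) y) ∧
  (∀ y ∈ I, HasDerivAt ψ' (ψ'' y) y) ∧
  ContinuousOn ψ'' I ∧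
  ∀ y ∈ I, ((Us y : ℂ) - c) * (ψ'' y - (α : ℂ)^2 * ψ y)
      - Complex.ofReal (deriv (deriv Us) y) * ψ y = 0


lemma ray_fix (Φ : (ℝ → ℂ) → (ℝ → ℂ))
    (hc : ∀ v, Continuous v → ∀ B, (∀ x, ‖v x‖ ≤ B) → Continuous (Φ v) ∧ ∃ B', ∀ x, ‖Φ v x‖ ≤ B')
    (hl : ∀ v v', Continuous v → Continuous v' → ∀ B, (∀ x, ‖v x‖ ≤ B) → (∀ x, ‖v' x‖ ≤ B) →
      ∀ D, 0 ≤ D → (∀ x, ‖v x - v' x‖ ≤ D) → ∀ x, ‖Φ v x - Φ v' x‖ ≤ D / 2) :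
    ∃ v, Continuous v ∧ (∃ B, ∀ x, ‖v x‖ ≤ B) ∧ Φ v = v := by
  have h1 : ∀ v : BoundedContinuousFunction ℝ ℂ, ∃ w : BoundedContinuousFunction ℝ ℂ,
      ∀ x, w x = Φ v x := by
    intro v
    obtain ⟨h1, B', h2⟩ := hc v v.continuous ‖v‖ (fun x => v.norm_coe_le_norm x)
    exact ⟨BoundedContinuousFunction.ofNormedAddCommGroup (Φ v) h1 B' h2, fun x => rfl⟩
  choose T hT using h1
  have hcon : ContractingWith (1/2 : NNReal) T := by
    refine ⟨by rw [← NNReal.coe_lt_coe]; norm_num, LipschitzWith.of_dist_le_mul fun v w => ?_⟩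
    rw [BoundedContinuousFunction.dist_le (by positivity)]
    intro x
    rw [dist_eq_norm, hT, hT]
    have := hl v w v.continuous w.continuous (max ‖v‖ ‖w‖)
      (fun x => (v.norm_coe_le_norm x).trans (le_max_left _ _))
      (fun x => (w.norm_coe_le_norm x).trans (le_max_right _ _)) (dist v w) dist_nonneg
      (fun x => by rw [← dist_eq_norm]; exact BoundedContinuousFunction.dist_coe_le_dist x) x
    refine this.trans (le_of_eq ?_)
    push_cast; ring
  refine ⟨(ContractingWith.fixedPoint T hcon : BoundedContinuousFunction ℝ ℂ), BoundedContinuousFunction.continuous _,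
    ⟨_, fun x => BoundedContinuousFunction.norm_coe_le_norm _ x⟩, ?_⟩
  funext x
  have := hcon.fixedPoint_isFixedPt
  rw [← hT, this]

open MeasureTheory in
lemma ray_deriv_Ioi (g : ℝ → ℂ) (hg : Continuous g) (hi : ∀ y, IntegrableOn g (Ioi y)) (y : ℝ) :
    HasDerivAt (fun y => ∫ z in Ioi y, g z) (-g y) y := by
  have h : (fun y => ∫ z in Ioi y, g z) = fun y => (∫ z in Ioi (0:ℝ), g z) - ∫ z in (0:ℝ)..y, g z := by
    funext y
    rw [← intervalIntegral.integral_Ioi_sub_Ioi' (hi 0) (hi y)]; ring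
  rw [h]
  have := (intervalIntegral.integral_hasDerivAt_right (hg.intervalIntegrable 0 y)
    (hg.stronglyMeasurableAtFilter _ _) hg.continuousAt).const_sub (∫ z in Ioi (0:ℝ), g z)
  exact this

lemma ray_deriv_int (g : ℝ → ℂ) (hg : Continuous g) (y : ℝ) :
    HasDerivAt (fun y => ∫ z in (0:ℝ)..y, g z) (g y) y :=
  intervalIntegral.integral_hasDerivAt_right (hg.intervalIntegrable 0 y)
    (hg.stronglyMeasurableAtFilter _ _) hg.continuousAt

lemma ray_exp_deriv (β : ℝ) (y : ℝ) :
    HasDerivAt (fun y : ℝ => Complex.exp ((β * y : ℝ) : ℂ)) (β * Complex.exp ((β * y : ℝ) : ℂ)) y := by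
  have h : HasDerivAt (fun y : ℝ => ((β * y : ℝ) : ℂ)) ((β : ℝ) : ℂ) y := by
    have := ((hasDerivAt_id y).const_mul β).ofReal_comp
    simpa using this
  have := h.cexp
  rwa [mul_comm] at this

lemma ray_weight_deriv (η M : ℝ) (y : ℝ) :
    HasDerivAt (fun y : ℝ => Real.exp (M * Real.exp (-η * y)))
      (-(η * M) * (Real.exp (-η * y) * Real.exp (M * Real.exp (-η * y)))) y := by
  have h := ((((hasDerivAt_id y).const_mul (-η)).exp).const_mul M).exp
  simp only [id] at h
  convert h using 1
  ring

open MeasureTheory in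
lemma ray_weight_Ioi (η M : ℝ) (hη : 0 < η) (hM : 0 < M) (y : ℝ) :
    IntegrableOn (fun z => Real.exp (-η * z) * Real.exp (M * Real.exp (-η * z))) (Ioi y) ∧
    ∫ z in Ioi y, Real.exp (-η * z) * Real.exp (M * Real.exp (-η * z))
      = (Real.exp (M * Real.exp (-η * y)) - 1) / (η * M) := by
  have hd : ∀ x, HasDerivAt (fun y : ℝ => -(Real.exp (M * Real.exp (-η * y))) / (η * M))
      (Real.exp (-η * x) * Real.exp (M * Real.exp (-η * x))) x := by
    intro x
    refine (((ray_weight_deriv η M x).neg).div_const (η * M)).congr_deriv (Eq.symm ?_)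
    rw [eq_div_iff (by positivity)]; ring
  have ht : Filter.Tendsto (fun y : ℝ => -(Real.exp (M * Real.exp (-η * y))) / (η * M))
      Filter.atTop (nhds (-1 / (η * M))) := by
    have h1 : Filter.Tendsto (fun y : ℝ => -η * y) Filter.atTop Filter.atBot :=
      Filter.tendsto_id.const_mul_atTop_of_neg (by linarith)
    have h2 := (Real.tendsto_exp_atBot.comp h1).const_mul M
    have h3 := ((Real.continuous_exp.tendsto _).comp h2).neg.div_const (η * M)
    simpa using h3
  refine ⟨integrableOn_Ioi_deriv_of_nonneg' (fun x _ => hd x) (fun x _ => by positivity) ht, ?_⟩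
  rw [integral_Ioi_of_hasDerivAt_of_nonneg' (fun x _ => hd x) (fun x _ => by positivity) ht]
  ring

lemma ray_weight_int (η M : ℝ) (hη : 0 < η) (hM : 0 < M) (y : ℝ) :
    ∫ z in (0:ℝ)..y, Real.exp (-η * z) * Real.exp (-M * Real.exp (-η * z))
      ≤ Real.exp (-M * Real.exp (-η * y)) / (η * M) := by
  have hd : ∀ x, HasDerivAt (fun y : ℝ => (Real.exp (-M * Real.exp (-η * y))) / (η * M))
      (Real.exp (-η * x) * Real.exp (-M * Real.exp (-η * x))) x := by
    intro x
    refine (((ray_weight_deriv η (-M) x)).div_const (η * M)).congr_deriv (Eq.symm ?_)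
    rw [eq_div_iff (by positivity)]; ring
  rw [intervalIntegral.integral_eq_sub_of_hasDerivAt (fun x _ => hd x)
    (Continuous.intervalIntegrable (by fun_prop) _ _)]
  have : 0 ≤ Real.exp (-M * Real.exp (-η * 0)) / (η * M) := by positivity
  linarith


open MeasureTheory in
noncomputable def rayPm (α : ℝ) (g : ℝ → ℂ) (y : ℝ) : ℂ :=
  -(Complex.exp ((2 * α * y : ℝ) : ℂ) * ∫ z in Ioi y, Complex.exp ((-(2 * α) * z : ℝ) : ℂ) * g z)

open MeasureTheory in
noncomputable def raySm (α : ℝ) (g : ℝ → ℂ) (y : ℝ) : ℂ :=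
  1 / (2 * α) * ((∫ z in Ioi y, g z) + rayPm α g y)

noncomputable def rayPp (α : ℝ) (g : ℝ → ℂ) (y : ℝ) : ℂ :=
  Complex.exp ((-(2 * α) * y : ℝ) : ℂ) *
    ∫ z in (0:ℝ)..y, Complex.exp ((2 * α * z : ℝ) : ℂ) * g z

noncomputable def raySp (α : ℝ) (g : ℝ → ℂ) (y : ℝ) : ℂ :=
  1 / (2 * α) * ((∫ z in (0:ℝ)..y, g z) - rayPp α g y)

lemma ray_exp_mul (β y : ℝ) :
    Complex.exp ((β * y : ℝ) : ℂ) * Complex.exp ((-β * y : ℝ) : ℂ) = 1 := by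
  rw [← Complex.exp_add]; push_cast; simp

lemma raySp_deriv (α : ℝ) (hα : 0 < α) (g : ℝ → ℂ) (hg : Continuous g) (y : ℝ) :
    HasDerivAt (rayPp α g) (-(2 * α) * rayPp α g y + g y) y ∧
    HasDerivAt (raySp α g) (rayPp α g y) y := by
  have hα' : (α : ℂ) ≠ 0 := by exact_mod_cast hα.ne'
  have h1 : HasDerivAt (rayPp α g) (-(2 * α) * rayPp α g y + g y) y := by
    have := (ray_exp_deriv (-(2 * α)) y).mul
      (ray_deriv_int (fun z => Complex.exp ((2 * α * z : ℝ) : ℂ) * g z) (by fun_prop) y)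
    refine HasDerivAt.congr_deriv this (Eq.symm ?_)
    have h := ray_exp_mul (2 * α) y
    unfold rayPp
    rw [← mul_assoc (Complex.exp _) (Complex.exp _) (g y), mul_comm (Complex.exp _) (Complex.exp _), h]
    push_cast; ring
  refine ⟨h1, ?_⟩
  have := ((ray_deriv_int g hg y).sub h1).const_mul (1 / (2 * (α : ℂ)))
  refine HasDerivAt.congr_deriv this (Eq.symm ?_)
  field_simp; ring

lemma raySp_sub (α : ℝ) (g g' : ℝ → ℂ) (hg : Continuous g) (hg' : Continuous g') (y : ℝ) :
    raySp α g y - raySp α g' y = raySp α (fun z => g z - g' z) y := by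
  unfold raySp rayPp
  simp only [mul_sub]
  rw [intervalIntegral.integral_sub (hg.intervalIntegrable _ _) (hg'.intervalIntegrable _ _),
    intervalIntegral.integral_sub (Continuous.intervalIntegrable (by fun_prop) _ _)
      (Continuous.intervalIntegrable (by fun_prop) _ _)]
  ring

lemma ray_kernel (α s : ℝ) (hα : 0 < α) (hs : s ≤ 0) :
    ‖1 - Complex.exp ((2 * α * s : ℝ) : ℂ)‖ ≤ 1 := by
  rw [← Complex.ofReal_exp, ← Complex.ofReal_one, ← Complex.ofReal_sub, Complex.norm_real,
    Real.norm_eq_abs, abs_le]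
  have h1 := Real.exp_pos (2 * α * s)
  have h2 : Real.exp (2 * α * s) ≤ 1 := Real.exp_le_one_iff.2 (by nlinarith)
  constructor <;> linarith

lemma raySp_bound (α η M K : ℝ) (hα : 0 < α) (hη : 0 < η) (hM : 0 < M) (hK : 0 ≤ K)
    (g : ℝ → ℂ) (hg : Continuous g)
    (hb : ∀ z, ‖g z‖ ≤ K * (Real.exp (-η * z) * Real.exp (-M * Real.exp (-η * z))))
    (y : ℝ) (hy : 0 ≤ y) :
    ‖raySp α g y‖ ≤ K / (2 * α) * (Real.exp (-M * Real.exp (-η * y)) / (η * M)) := by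
  have he : raySp α g y = 1 / (2 * α) *
      ∫ z in (0:ℝ)..y, (1 - Complex.exp ((2 * α * (z - y) : ℝ) : ℂ)) * g z := by
    unfold raySp rayPp
    rw [← intervalIntegral.integral_const_mul, ← intervalIntegral.integral_sub
      (hg.intervalIntegrable _ _) (Continuous.intervalIntegrable (by fun_prop) _ _)]
    congr 2
    funext z
    rw [← mul_assoc, ← Complex.exp_add, sub_mul, one_mul]
    congr 3
    push_cast; ring_nf
  rw [he, norm_mul]
  have h1 : ‖∫ z in (0:ℝ)..y, (1 - Complex.exp ((2 * α * (z - y) : ℝ) : ℂ)) * g z‖ ≤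
      ∫ z in (0:ℝ)..y, K * (Real.exp (-η * z) * Real.exp (-M * Real.exp (-η * z))) := by
    refine intervalIntegral.norm_integral_le_of_norm_le hy ?_
      (Continuous.intervalIntegrable (by fun_prop) _ _)
    refine Filter.Eventually.of_forall fun z hz => ?_
    rw [norm_mul]
    have := ray_kernel α (z - y) hα (by linarith [hz.2])
    exact (mul_le_of_le_one_left (norm_nonneg _) this).trans (hb z)
  rw [intervalIntegral.integral_const_mul] at h1
  have h2 := ray_weight_int η M hη hM y
  have h3 : ‖(1 / (2 * (α : ℂ)))‖ = 1 / (2 * α) := by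
    simp [abs_of_pos hα]
  rw [h3]
  calc _ ≤ 1 / (2 * α) * (K * (Real.exp (-M * Real.exp (-η * y)) / (η * M))) := by
        gcongr
        exact h1.trans (by gcongr)
    _ = _ := by ring

open MeasureTheory in
lemma ray_integrable (α η M K : ℝ) (hα : 0 < α) (hη : 0 < η) (hM : 0 < M)
    (g : ℝ → ℂ) (hg : Continuous g)
    (hb : ∀ z, ‖g z‖ ≤ K * (Real.exp (-η * z) * Real.exp (M * Real.exp (-η * z)))) (y : ℝ) :
    IntegrableOn g (Ioi y) ∧
    IntegrableOn (fun z => Complex.exp ((-(2 * α) * z : ℝ) : ℂ) * g z) (Ioi y) := by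
  have h1 : IntegrableOn g (Ioi y) :=
    ((ray_weight_Ioi η M hη hM y).1.const_mul K).mono' hg.aestronglyMeasurable
      (Filter.Eventually.of_forall hb)
  refine ⟨h1, ?_⟩
  refine h1.bdd_mul (c := Real.exp (-(2 * α) * y))
    (Continuous.aestronglyMeasurable (by fun_prop)) ?_
  rw [ae_restrict_iff' measurableSet_Ioi]
  refine Filter.Eventually.of_forall fun z hz => ?_
  rw [Complex.norm_exp_ofReal]
  apply Real.exp_le_exp.2
  have : y < z := hz
  nlinarith

open MeasureTheory in
lemma raySm_deriv (α η M K : ℝ) (hα : 0 < α) (hη : 0 < η) (hM : 0 < M)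
    (g : ℝ → ℂ) (hg : Continuous g)
    (hb : ∀ z, ‖g z‖ ≤ K * (Real.exp (-η * z) * Real.exp (M * Real.exp (-η * z)))) (y : ℝ) :
    HasDerivAt (rayPm α g) (2 * α * rayPm α g y + g y) y ∧
    HasDerivAt (raySm α g) (rayPm α g y) y := by
  have hα' : (α : ℂ) ≠ 0 := by exact_mod_cast hα.ne'
  have hi := ray_integrable α η M K hα hη hM g hg hb
  have h1 : HasDerivAt (rayPm α g) (2 * α * rayPm α g y + g y) y := by
    have := ((ray_exp_deriv (2 * α) y).mul
      (ray_deriv_Ioi (fun z => Complex.exp ((-(2 * α) * z : ℝ) : ℂ) * g z) (by fun_prop)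
        (fun y => (hi y).2) y)).neg
    refine HasDerivAt.congr_deriv this (Eq.symm ?_)
    have h := ray_exp_mul (2 * α) y
    unfold rayPm
    rw [mul_neg (Complex.exp _), ← mul_assoc (Complex.exp _) (Complex.exp _) (g y), h]
    push_cast; ring
  refine ⟨h1, ?_⟩
  have := ((ray_deriv_Ioi g hg (fun y => (hi y).1) y).add h1).const_mul (1 / (2 * (α : ℂ)))
  refine HasDerivAt.congr_deriv this (Eq.symm ?_)
  field_simp; ring

open MeasureTheory in
lemma raySm_sub (α η M K : ℝ) (hα : 0 < α) (hη : 0 < η) (hM : 0 < M)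
    (g g' : ℝ → ℂ) (hg : Continuous g) (hg' : Continuous g')
    (hb : ∀ z, ‖g z‖ ≤ K * (Real.exp (-η * z) * Real.exp (M * Real.exp (-η * z))))
    (hb' : ∀ z, ‖g' z‖ ≤ K * (Real.exp (-η * z) * Real.exp (M * Real.exp (-η * z)))) (y : ℝ) :
    raySm α g y - raySm α g' y = raySm α (fun z => g z - g' z) y := by
  have hi := ray_integrable α η M K hα hη hM g hg hb y
  have hi' := ray_integrable α η M K hα hη hM g' hg' hb' y
  unfold raySm rayPm
  simp only [mul_sub]
  rw [integral_sub hi.1 hi'.1, integral_sub hi.2 hi'.2]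
  ring

open MeasureTheory in
lemma raySm_bound (α η M K : ℝ) (hα : 0 < α) (hη : 0 < η) (hM : 0 < M) (hK : 0 ≤ K)
    (g : ℝ → ℂ) (hg : Continuous g)
    (hb : ∀ z, ‖g z‖ ≤ K * (Real.exp (-η * z) * Real.exp (M * Real.exp (-η * z))))
    (y : ℝ) :
    ‖raySm α g y‖ ≤ K / (2 * α) * ((Real.exp (M * Real.exp (-η * y)) - 1) / (η * M)) := by
  have hi := ray_integrable α η M K hα hη hM g hg hb y
  have he : raySm α g y = 1 / (2 * α) *
      ∫ z in Ioi y, (1 - Complex.exp ((2 * α * (y - z) : ℝ) : ℂ)) * g z := by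
    unfold raySm rayPm
    rw [← integral_const_mul, ← sub_eq_add_neg, ← integral_sub hi.1 (hi.2.const_mul _)]
    congr 2
    funext z
    rw [← mul_assoc, ← Complex.exp_add, sub_mul, one_mul]
    congr 3
    push_cast; ring_nf
  rw [he, norm_mul]
  have h1 : ‖∫ z in Ioi y, (1 - Complex.exp ((2 * α * (y - z) : ℝ) : ℂ)) * g z‖ ≤
      ∫ z in Ioi y, K * (Real.exp (-η * z) * Real.exp (M * Real.exp (-η * z))) := by
    refine norm_integral_le_of_norm_le ((ray_weight_Ioi η M hη hM y).1.const_mul K) ?_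
    rw [ae_restrict_iff' measurableSet_Ioi]
    refine Filter.Eventually.of_forall fun z hz => ?_
    rw [norm_mul]
    have hz' : y < z := hz
    have := ray_kernel α (y - z) hα (by linarith)
    exact (mul_le_of_le_one_left (norm_nonneg _) this).trans (hb z)
  rw [integral_const_mul, (ray_weight_Ioi η M hη hM y).2] at h1
  have h3 : ‖(1 / (2 * (α : ℂ)))‖ = 1 / (2 * α) := by
    simp [abs_of_pos hα]
  rw [h3]
  calc _ ≤ 1 / (2 * α) * (K * ((Real.exp (M * Real.exp (-η * y)) - 1) / (η * M))) := by
        gcongr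
    _ = _ := by ring


lemma ray_G_bound (q : ℝ → ℂ) (C η M B : ℝ) (hC : 0 < C)
    (hqb : ∀ z, ‖q z‖ ≤ C * Real.exp (-η * z)) (v : ℝ → ℂ) (hv : ∀ z, ‖v z‖ ≤ B) (z : ℝ) :
    ‖q z * (Real.exp (M * Real.exp (-η * z)) : ℂ) * v z‖ ≤
      (C * B) * (Real.exp (-η * z) * Real.exp (M * Real.exp (-η * z))) := by
  rw [norm_mul, norm_mul, Complex.norm_real, Real.norm_eq_abs, abs_of_pos (Real.exp_pos _)]
  calc _ ≤ (C * Real.exp (-η * z)) * Real.exp (M * Real.exp (-η * z)) * B := by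
        gcongr
        · exact hqb z
        · exact hv z
    _ = _ := by ring

lemma ray_minus (q : ℝ → ℂ) (hq : Continuous q) (C η α : ℝ) (hC : 0 < C) (hη : 0 < η) (hα : 0 < α)
    (hqb : ∀ z, ‖q z‖ ≤ C * Real.exp (-η * z)) :
    ∃ W P : ℝ → ℂ, (∀ y, HasDerivAt W (P y) y) ∧
      (∀ y, HasDerivAt P (2 * α * P y + q y * W y) y) ∧
      Filter.Tendsto W Filter.atTop (nhds 1) := by
  obtain ⟨M, hMdef⟩ : ∃ M, M = C / (α * η) := ⟨_, rfl⟩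
  have hM : 0 < M := by rw [hMdef]; positivity
  have hCM : C = α * η * M := by rw [hMdef]; field_simp
  obtain ⟨ω, hω⟩ : ∃ ω : ℝ → ℝ, ω = fun z => Real.exp (M * Real.exp (-η * z)) := ⟨_, rfl⟩
  have hωc : Continuous ω := by rw [hω]; fun_prop
  have hω1 : ∀ z, 1 ≤ ω z := by
    intro z; rw [hω]; exact Real.one_le_exp (by positivity)
  have hω0 : ∀ z, (ω z : ℂ) ≠ 0 := by
    intro z; have := hω1 z; exact_mod_cast (by linarith : ω z ≠ 0)
  have hωn : ∀ z, ‖((ω z : ℂ))⁻¹‖ = (ω z)⁻¹ := by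
    intro z
    rw [norm_inv, Complex.norm_real, Real.norm_eq_abs, abs_of_pos (by linarith [hω1 z])]
  let G : (ℝ → ℂ) → ℝ → ℂ := fun v z => q z * (ω z : ℂ) * v z
  have hGc : ∀ v, Continuous v → Continuous (G v) := by
    intro v hv
    exact (hq.mul (Complex.continuous_ofReal.comp hωc)).mul hv
  have hGb : ∀ (v : ℝ → ℂ) B, (∀ z, ‖v z‖ ≤ B) → ∀ z, ‖G v z‖ ≤
      (C * B) * (Real.exp (-η * z) * Real.exp (M * Real.exp (-η * z))) := by
    intro v B hv z
    have := ray_G_bound q C η M B hC hqb v hv z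
    simp only [G, hω]
    exact this
  have hS : ∀ (v : ℝ → ℂ) B, 0 ≤ B → Continuous v → (∀ z, ‖v z‖ ≤ B) → ∀ y, ‖raySm α (G v) y‖ ≤
      B / 2 * (ω y - 1) := by
    intro v B hB hvc hv y
    have := raySm_bound α η M (C * B) hα hη hM (by positivity) (G v) (hGc v hvc) (hGb v B hv) y
    refine this.trans (le_of_eq ?_)
    rw [hω, hCM]; field_simp
  have hSd : ∀ (v : ℝ → ℂ) B, Continuous v → (∀ z, ‖v z‖ ≤ B) → ∀ y,
      HasDerivAt (rayPm α (G v)) (2 * α * rayPm α (G v) y + G v y) y ∧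
      HasDerivAt (raySm α (G v)) (rayPm α (G v) y) y := by
    intro v B hvc hv y
    exact raySm_deriv α η M (C * B) hα hη hM (G v) (hGc v hvc) (hGb v B hv) y
  obtain ⟨v, hvc, ⟨B, hvB⟩, hfix⟩ := ray_fix (fun v y => (ω y : ℂ)⁻¹ * (1 + raySm α (G v) y))
    (by
      intro v hvc B hv
      have hB : 0 ≤ B := (norm_nonneg _).trans (hv 0)
      constructor
      · refine ((Complex.continuous_ofReal.comp hωc).inv₀ hω0).mul (continuous_const.add ?_)
        exact continuous_iff_continuousAt.2 fun y => (hSd v B hvc hv y).2.continuousAt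
      · refine ⟨1 + B / 2, fun y => ?_⟩
        rw [norm_mul, hωn, inv_mul_le_iff₀ (by linarith [hω1 y])]
        refine (norm_add_le _ _).trans ?_
        have := hS v B hB hvc hv y
        rw [norm_one]
        nlinarith [hω1 y])
    (by
      intro v v' hvc hvc' B hv hv' D hD hvv y
      rw [← mul_sub, add_sub_add_left_eq_sub,
        raySm_sub α η M (C * B) hα hη hM _ _ (hGc v hvc) (hGc v' hvc') (hGb v B hv) (hGb v' B hv')]
      have h := hS (fun z => v z - v' z) D hD (hvc.sub hvc') hvv y
      have he : G (fun z => v z - v' z) = fun z => G v z - G v' z := by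
        funext z; simp only [G]; ring
      rw [he] at h
      rw [norm_mul, hωn, inv_mul_le_iff₀ (by linarith [hω1 y])]
      nlinarith [hω1 y])
  have hB : 0 ≤ B := (norm_nonneg _).trans (hvB 0)
  have hW : ∀ y, 1 + raySm α (G v) y = ω y * v y := by
    intro y
    have := congrFun hfix y

    rw [← this, mul_inv_cancel_left₀ (hω0 y)]
  refine ⟨fun y => 1 + raySm α (G v) y, rayPm α (G v), fun y => (hSd v B hvc hvB y).2.const_add 1,
    fun y => ?_, ?_⟩
  · refine (hSd v B hvc hvB y).1.congr_deriv ?_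
    simp only [hW y, G]; ring
  · have h0 : Filter.Tendsto (fun y => B / 2 * (ω y - 1)) Filter.atTop (nhds 0) := by
      have h1 : Filter.Tendsto (fun y : ℝ => -η * y) Filter.atTop Filter.atBot :=
        Filter.tendsto_id.const_mul_atTop_of_neg (by linarith)
      have h2 := (Real.tendsto_exp_atBot.comp h1).const_mul M
      have h3 := (((Real.continuous_exp.tendsto _).comp h2).sub_const 1).const_mul (B / 2)
      rw [hω]
      simpa using h3
    have h4 := squeeze_zero_norm (fun y => hS v B hB hvc hvB y) h0
    simpa using h4.const_add 1

lemma ray_plus (q : ℝ → ℂ) (hq : Continuous q) (C η α : ℝ) (hC : 0 < C) (hη : 0 < η) (hα : 0 < α)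
    (hqb : ∀ z, ‖q z‖ ≤ C * Real.exp (-η * z)) (a b : ℂ) :
    ∃ W P : ℝ → ℂ, (∀ y, HasDerivAt W (P y) y) ∧
      (∀ y ≥ (0:ℝ), HasDerivAt P (2 * (-α : ℝ) * P y + q y * W y) y) ∧
      (∃ B, ∀ y ≥ (0:ℝ), ‖W y‖ ≤ B) ∧ W 0 = a + b ∧ P 0 = -(2 * α) * b := by
  obtain ⟨M, hMdef⟩ : ∃ M, M = C / (α * η) := ⟨_, rfl⟩
  have hM : 0 < M := by rw [hMdef]; positivity
  have hCM : C = α * η * M := by rw [hMdef]; field_simp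
  obtain ⟨ω, hω⟩ : ∃ ω : ℝ → ℝ, ω = fun z => Real.exp (-M * Real.exp (-η * z)) := ⟨_, rfl⟩
  have hωc : Continuous ω := by rw [hω]; fun_prop
  have hωp : ∀ z, 0 < ω z := by
    intro z; rw [hω]; positivity
  have hωl : ∀ z ≥ (0:ℝ), Real.exp (-M) ≤ ω z := by
    intro z hz; rw [hω]
    have : Real.exp (-η * z) ≤ 1 := Real.exp_le_one_iff.2 (by nlinarith)
    exact Real.exp_le_exp.2 (by nlinarith)
  have hω1 : ∀ z, ω z ≤ 1 := by
    intro z; rw [hω]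
    have := Real.exp_pos (-η * z)
    exact Real.exp_le_one_iff.2 (by nlinarith)
  have hω0 : ∀ z, (ω z : ℂ) ≠ 0 := by
    intro z; exact_mod_cast (hωp z).ne'
  have hωn : ∀ z, ‖((ω z : ℂ))⁻¹‖ = (ω z)⁻¹ := by
    intro z
    rw [norm_inv, Complex.norm_real, Real.norm_eq_abs, abs_of_pos (hωp z)]
  let G : (ℝ → ℂ) → ℝ → ℂ := fun v z => q z * (ω z : ℂ) * v z
  have hGc : ∀ v, Continuous v → Continuous (G v) := by
    intro v hv
    exact (hq.mul (Complex.continuous_ofReal.comp hωc)).mul hv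
  have hGb : ∀ (v : ℝ → ℂ) B, (∀ z, ‖v z‖ ≤ B) → ∀ z, ‖G v z‖ ≤
      (C * B) * (Real.exp (-η * z) * Real.exp (-M * Real.exp (-η * z))) := by
    intro v B hv z
    have := ray_G_bound q C η (-M) B hC hqb v hv z
    simp only [G, hω]
    exact this
  have hS : ∀ (v : ℝ → ℂ) B, 0 ≤ B → Continuous v → (∀ z, ‖v z‖ ≤ B) → ∀ y ≥ (0:ℝ),
      ‖raySp α (G v) y‖ ≤ B / 2 * ω y := by
    intro v B hB hvc hv y hy
    have := raySp_bound α η M (C * B) hα hη hM (by positivity) (G v) (hGc v hvc) (hGb v B hv) y hy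
    refine this.trans (le_of_eq ?_)
    rw [hω, hCM]; field_simp
  have hSd : ∀ (v : ℝ → ℂ), Continuous v → ∀ y,
      HasDerivAt (rayPp α (G v)) (-(2 * α) * rayPp α (G v) y + G v y) y ∧
      HasDerivAt (raySp α (G v)) (rayPp α (G v) y) y := by
    intro v hvc y
    exact raySp_deriv α hα (G v) (hGc v hvc) y
  obtain ⟨h, hh⟩ : ∃ h : ℝ → ℂ, h = fun y => a + b * Complex.exp ((-(2 * α) * y : ℝ) : ℂ) :=
    ⟨_, rfl⟩
  have hhc : Continuous h := by rw [hh]; fun_prop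
  have hhb : ∀ y ≥ (0:ℝ), ‖h y‖ ≤ ‖a‖ + ‖b‖ := by
    intro y hy
    rw [hh]
    refine (norm_add_le _ _).trans ?_
    rw [norm_mul, Complex.norm_exp_ofReal]
    have : Real.exp (-(2 * α) * y) ≤ 1 := Real.exp_le_one_iff.2 (by nlinarith)
    nlinarith [norm_nonneg b]
  have hhd : ∀ y, HasDerivAt h (-(2 * α) * (b * Complex.exp ((-(2 * α) * y : ℝ) : ℂ))) y := by
    intro y
    rw [hh]
    refine (((ray_exp_deriv (-(2 * α)) y).const_mul b).const_add a).congr_deriv ?_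
    push_cast; ring
  have hm0 : ∀ y : ℝ, 0 ≤ max y 0 := fun y => le_max_right _ _
  have hmc : Continuous (fun y : ℝ => max y 0) := by fun_prop
  obtain ⟨v, hvc, ⟨B, hvB⟩, hfix⟩ := ray_fix
    (fun v y => (ω (max y 0) : ℂ)⁻¹ * (h (max y 0) + raySp α (G v) (max y 0)))
    (by
      intro v hvc B hv
      have hB : 0 ≤ B := (norm_nonneg _).trans (hv 0)
      have hSc : Continuous (raySp α (G v)) :=
        continuous_iff_continuousAt.2 fun y => (hSd v hvc y).2.continuousAt
      constructor
      · exact (((Complex.continuous_ofReal.comp hωc).comp hmc).inv₀ (fun y => hω0 _)).mul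
          ((hhc.comp hmc).add (hSc.comp hmc))
      · refine ⟨(Real.exp (-M))⁻¹ * (‖a‖ + ‖b‖ + B / 2), fun y => ?_⟩
        rw [norm_mul, hωn]
        have h1 := hS v B hB hvc hv _ (hm0 y)
        have h2 := hω1 (max y 0)
        have h3 := hhb _ (hm0 y)
        have h4 := hωl _ (hm0 y)
        gcongr
        refine (norm_add_le _ _).trans (add_le_add h3 ?_)
        nlinarith)
    (by
      intro v v' hvc hvc' B hv hv' D hD hvv y
      rw [← mul_sub, add_sub_add_left_eq_sub,
        raySp_sub α _ _ (hGc v hvc) (hGc v' hvc')]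
      have h := hS (fun z => v z - v' z) D hD (hvc.sub hvc') hvv _ (hm0 y)
      have he : G (fun z => v z - v' z) = fun z => G v z - G v' z := by
        funext z; simp only [G]; ring
      rw [he] at h
      rw [norm_mul, hωn, inv_mul_le_iff₀ (hωp _)]
      linarith)
  have hB : 0 ≤ B := (norm_nonneg _).trans (hvB 0)
  have hW : ∀ y ≥ (0:ℝ), h y + raySp α (G v) y = ω y * v y := by
    intro y hy
    have := congrFun hfix y
    simp only [max_eq_left hy] at this
    rw [← this, mul_inv_cancel_left₀ (hω0 y)]
  refine ⟨fun y => h y + raySp α (G v) y,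
    fun y => -(2 * α) * (b * Complex.exp ((-(2 * α) * y : ℝ) : ℂ)) + rayPp α (G v) y,
    fun y => (hhd y).add (hSd v hvc y).2, fun y hy => ?_, ⟨B, fun y hy => ?_⟩, ?_, ?_⟩
  · refine ((((ray_exp_deriv (-(2 * α)) y).const_mul b).const_mul (-(2 * (α : ℂ)))).add
      (hSd v hvc y).1).congr_deriv ?_
    simp only [hW y hy, G]; push_cast; ring
  · simp only [hW y hy]
    rw [norm_mul, Complex.norm_real, Real.norm_eq_abs, abs_of_pos (hωp y)]
    exact (mul_le_of_le_one_left (norm_nonneg _) (hω1 y)).trans (hvB y)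
  · simp [hh, raySp, rayPp]
  · simp [rayPp]

lemma ray_psi (q W P : ℝ → ℂ) (β y : ℝ) (h1 : HasDerivAt W (P y) y)
    (h2 : HasDerivAt P (2 * β * P y + q y * W y) y) :
    HasDerivAt (fun y => Complex.exp ((-β * y : ℝ) : ℂ) * W y)
      (Complex.exp ((-β * y : ℝ) : ℂ) * (P y - β * W y)) y ∧
    HasDerivAt (fun y => Complex.exp ((-β * y : ℝ) : ℂ) * (P y - β * W y))
      (((β : ℂ) ^ 2 + q y) * (Complex.exp ((-β * y : ℝ) : ℂ) * W y)) y := by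
  constructor
  · refine ((ray_exp_deriv (-β) y).mul h1).congr_deriv ?_
    push_cast; ring
  · refine ((ray_exp_deriv (-β) y).mul (h2.sub (h1.const_mul (β : ℂ)))).congr_deriv ?_
    simp only [Pi.sub_apply]
    push_cast; ring

lemma ray_wronskian (Q f f' g g' : ℝ → ℂ)
    (hf : ∀ y ≥ (0:ℝ), HasDerivAt f (f' y) y) (hf' : ∀ y ≥ (0:ℝ), HasDerivAt f' (Q y * f y) y)
    (hg : ∀ y ≥ (0:ℝ), HasDerivAt g (g' y) y) (hg' : ∀ y ≥ (0:ℝ), HasDerivAt g' (Q y * g y) y) :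
    ∀ y ≥ (0:ℝ), f y * g' y - f' y * g y = f 0 * g' 0 - f' 0 * g 0 := by
  have hd : ∀ y ≥ (0:ℝ), HasDerivAt (fun y => f y * g' y - f' y * g y) 0 y := by
    intro y hy
    refine (((hf y hy).mul (hg' y hy)).sub ((hf' y hy).mul (hg y hy))).congr_deriv ?_
    ring
  intro y hy
  exact constant_of_has_deriv_right_zero (a := 0) (b := y)
    (fun x hx => (hd x hx.1).continuousAt.continuousWithinAt)
    (fun x hx => (hd x hx.1).hasDerivWithinAt) y ⟨hy, le_rfl⟩

lemma ray_isSol (Us : ℝ → ℝ) (α : ℝ) (c : ℂ) (hc : c.im ≠ 0) (q f f' : ℝ → ℂ) (hq : Continuous q)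
    (hqe : ∀ y ≥ (0:ℝ), q y = ((deriv (deriv Us) y : ℝ) : ℂ) / ((Us y : ℂ) - c))
    (hf : ∀ y ≥ (0:ℝ), HasDerivAt f (f' y) y)
    (hf' : ∀ y ≥ (0:ℝ), HasDerivAt f' (((α : ℂ) ^ 2 + q y) * f y) y) :
    IsRayleighSolutionOn Us α c f f' (fun y => ((α : ℂ) ^ 2 + q y) * f y) (Ici 0) := by
  refine ⟨hf, hf', ?_, fun y hy => ?_⟩
  · exact (Continuous.continuousOn (by fun_prop)).mul
      (fun y hy => (hf y hy).continuousAt.continuousWithinAt)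
  · have h0 : (Us y : ℂ) - c ≠ 0 := by
      intro h
      apply hc
      have := congrArg Complex.im h
      simpa using this
    simp only
    rw [hqe y hy]
    field_simp
    ring

/-- Existence of two solutions `ψ₊`, `ψ₋` of the Rayleigh equation on
`[0, ∞)`, with `ψ₋(y) e^{αy} → 1` at infinity, `|ψ₊(y)| ≤ C e^{αy}`, and unit Wronskian. -/
theorem rayleigh_global_solutions_half_line
    (Us : ℝ → ℝ) (hUs : ContDiff ℝ (⊤ : ℕ∞) Us)
    (Uplus C₀ η : ℝ) (hC₀ : 0 < C₀) (hη : 0 < η)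
    (hdecay : ∀ y ≥ (0:ℝ),
      |Us y - Uplus| + |deriv Us y| + |deriv (deriv Us) y| ≤ C₀ * Real.exp (-η * y))
    (α : ℝ) (hα : 0 < α) (c : ℂ) (hc : c.im ≠ 0) :
    ∃ ψp ψp' ψp'' ψm ψm' ψm'' : ℝ → ℂ,
      IsRayleighSolutionOn Us α c ψp ψp' ψp'' (Ici 0) ∧
      IsRayleighSolutionOn Us α c ψm ψm' ψm'' (Ici 0) ∧
      Filter.Tendsto (fun y : ℝ => ψm y * Complex.exp ((α * y : ℝ) : ℂ))
        Filter.atTop (nhds 1) ∧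
      (∃ C : ℝ, ∀ y ≥ (0:ℝ), ‖ψp y‖ ≤ C * Real.exp (α * y)) ∧
      ∀ y ≥ (0:ℝ), ψm y * ψp' y - ψm' y * ψp y = 1 := by
  obtain ⟨q, hqdef⟩ : ∃ q : ℝ → ℂ, q = fun y =>
      ((deriv (deriv Us) (max y 0) : ℝ) : ℂ) / ((Us (max y 0) : ℂ) - c) := ⟨_, rfl⟩
  have hne : ∀ y, |c.im| ≤ ‖(Us y : ℂ) - c‖ := by
    intro y
    have := Complex.abs_im_le_norm ((Us y : ℂ) - c)
    simpa using this
  have hcp : 0 < |c.im| := abs_pos.2 hc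
  have hd2 : Continuous (deriv (deriv Us)) := by
    have := (hUs.of_le (m := 2) (WithTop.coe_le_coe.2 (le_top : (2 : ℕ∞) ≤ ⊤))).continuous_iteratedDeriv 2 le_rfl
    rwa [iteratedDeriv_succ, iteratedDeriv_one] at this
  have hq : Continuous q := by
    rw [hqdef]
    have hUc := hUs.continuous
    refine Continuous.div (by fun_prop) (by fun_prop) fun y h => ?_
    have := hne (max y 0)
    rw [h, norm_zero] at this
    linarith
  have hqe : ∀ y ≥ (0:ℝ), q y = ((deriv (deriv Us) y : ℝ) : ℂ) / ((Us y : ℂ) - c) := by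
    intro y hy
    simp only [hqdef, max_eq_left hy]
  have hqb : ∀ z, ‖q z‖ ≤ (C₀ / |c.im|) * Real.exp (-η * z) := by
    intro z
    have h1 := hdecay (max z 0) (le_max_right _ _)
    have h2 : Real.exp (-η * max z 0) ≤ Real.exp (-η * z) :=
      Real.exp_le_exp.2 (by nlinarith [le_max_left z 0])
    have h3 : |deriv (deriv Us) (max z 0)| ≤ C₀ * Real.exp (-η * z) := by
      have := abs_nonneg (Us (max z 0) - Uplus)
      have := abs_nonneg (deriv Us (max z 0))
      nlinarith
    rw [hqdef]
    simp only [norm_div, Complex.norm_real, Real.norm_eq_abs]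
    calc _ ≤ (C₀ * Real.exp (-η * z)) / |c.im| := by
          gcongr
          exact hne _
      _ = _ := by ring
  have hC : 0 < C₀ / |c.im| := by positivity
  obtain ⟨W, P, hW, hP, hlim⟩ := ray_minus q hq _ η α hC hη hα hqb
  obtain ⟨ψm, hψm⟩ : ∃ f : ℝ → ℂ, f = fun y => Complex.exp ((-α * y : ℝ) : ℂ) * W y := ⟨_, rfl⟩
  obtain ⟨ψm', hψm'⟩ : ∃ f : ℝ → ℂ,
    f = fun y => Complex.exp ((-α * y : ℝ) : ℂ) * (P y - α * W y) := ⟨_, rfl⟩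
  have hm1 : ∀ y ≥ (0:ℝ), HasDerivAt ψm (ψm' y) y := by
    intro y _; rw [hψm, hψm']; exact (ray_psi q W P α y (hW y) (hP y)).1
  have hm2 : ∀ y ≥ (0:ℝ), HasDerivAt ψm' (((α : ℂ) ^ 2 + q y) * ψm y) y := by
    intro y _; rw [hψm, hψm']; exact (ray_psi q W P α y (hW y) (hP y)).2
  have hml : Filter.Tendsto (fun y : ℝ => ψm y * Complex.exp ((α * y : ℝ) : ℂ))
        Filter.atTop (nhds 1) := by
    refine hlim.congr fun y => ?_
    have := ray_exp_mul α y
    rw [hψm]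
    linear_combination (-W y) * this
  have hplus : ∀ a b : ℂ, ∃ f f' : ℝ → ℂ, (∀ y ≥ (0:ℝ), HasDerivAt f (f' y) y) ∧
      (∀ y ≥ (0:ℝ), HasDerivAt f' (((α : ℂ) ^ 2 + q y) * f y) y) ∧
      (∃ C : ℝ, ∀ y ≥ (0:ℝ), ‖f y‖ ≤ C * Real.exp (α * y)) ∧
      f 0 = a + b ∧ f' 0 = α * (a - b) := by
    intro a b
    obtain ⟨V, R, hV, hR, ⟨B, hB⟩, h0, h0'⟩ := ray_plus q hq _ η α hC hη hα hqb a b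
    refine ⟨_, _, fun y hy => (ray_psi q V R (-α) y (hV y) (hR y hy)).1, fun y hy => ?_,
      ⟨B, fun y hy => ?_⟩, ?_, ?_⟩
    · refine (ray_psi q V R (-α) y (hV y) (hR y hy)).2.congr_deriv ?_
      push_cast; ring
    · rw [norm_mul, Complex.norm_exp_ofReal, neg_neg, mul_comm]
      have := hB y hy
      gcongr
    · simp [h0]
    · simp [h0, h0']; ring
  have hmain : ∀ f f' : ℝ → ℂ, (∀ y ≥ (0:ℝ), HasDerivAt f (f' y) y) →
      (∀ y ≥ (0:ℝ), HasDerivAt f' (((α : ℂ) ^ 2 + q y) * f y) y) →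
      (∃ C : ℝ, ∀ y ≥ (0:ℝ), ‖f y‖ ≤ C * Real.exp (α * y)) →
      ψm 0 * f' 0 - ψm' 0 * f 0 ≠ 0 →
      ∃ ψp ψp' ψp'' ψm ψm' ψm'' : ℝ → ℂ,
      IsRayleighSolutionOn Us α c ψp ψp' ψp'' (Ici 0) ∧
      IsRayleighSolutionOn Us α c ψm ψm' ψm'' (Ici 0) ∧
      Filter.Tendsto (fun y : ℝ => ψm y * Complex.exp ((α * y : ℝ) : ℂ))
        Filter.atTop (nhds 1) ∧
      (∃ C : ℝ, ∀ y ≥ (0:ℝ), ‖ψp y‖ ≤ C * Real.exp (α * y)) ∧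
      ∀ y ≥ (0:ℝ), ψm y * ψp' y - ψm' y * ψp y = 1 := by
    intro f f' hf hf' ⟨B, hB⟩ hw
    have hwr := ray_wronskian _ _ _ _ _ hm1 hm2 hf hf'
    generalize ψm 0 * f' 0 - ψm' 0 * f 0 = w at hw hwr
    refine ⟨fun y => w⁻¹ * f y, fun y => w⁻¹ * f' y, _, ψm, ψm', _,
      ray_isSol Us α c hc q _ _ hq hqe (fun y hy => (hf y hy).const_mul _)
        (fun y hy => ((hf' y hy).const_mul _).congr_deriv (by ring)),
      ray_isSol Us α c hc q _ _ hq hqe hm1 hm2, hml, ⟨‖w⁻¹‖ * B, fun y hy => ?_⟩, fun y hy => ?_⟩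
    · rw [norm_mul, mul_assoc]
      have := hB y hy
      gcongr
    · have h1 := hwr y hy
      have h2 := inv_mul_cancel₀ hw
      linear_combination w⁻¹ * h1 + h2
  obtain ⟨f, f', hf, hf', hfB, f0, f0'⟩ := hplus 1 0
  obtain ⟨g, g', hg, hg', hgB, g0, g0'⟩ := hplus 0 1
  by_cases h1 : ψm 0 * f' 0 - ψm' 0 * f 0 = 0
  · by_cases h2 : ψm 0 * g' 0 - ψm' 0 * g 0 = 0
    · exfalso
      have w1 := ray_wronskian _ _ _ _ _ hm1 hm2 hf hf'
      have w2 := ray_wronskian _ _ _ _ _ hm1 hm2 hg hg'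
      have w3 := ray_wronskian _ _ _ _ _ hf hf' hg hg'
      have hα' : (α : ℂ) ≠ 0 := by exact_mod_cast hα.ne'
      have hz : ∀ y ≥ (0:ℝ), ψm y = 0 := by
        intro y hy
        have e1 := w1 y hy
        have e2 := w2 y hy
        have e3 := w3 y hy
        rw [h1] at e1
        rw [h2] at e2
        rw [f0, f0', g0, g0'] at e3
        have : (2 * (α : ℂ)) * ψm y = 0 := by
          linear_combination g y * e1 - f y * e2 + ψm y * e3
        simpa [hα'] using this
      have hl0 : Filter.Tendsto (fun y : ℝ => ψm y * Complex.exp ((α * y : ℝ) : ℂ))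
          Filter.atTop (nhds 0) := by
        refine tendsto_const_nhds.congr' ?_
        filter_upwards [Filter.eventually_ge_atTop (0:ℝ)] with y hy
        rw [hz y hy, zero_mul]
      exact zero_ne_one (tendsto_nhds_unique hl0 hml)
    · exact hmain g g' hg hg' hgB h2
  · exact hmain f f' hf hf' hfB h1
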